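/- Every derivation of the q-deformed W(2,2) algebra is the sum of a derivation of degree zero and an inner derivation: if D: W_q → W_q is linear with D ∘ α = α ∘ D and D([x,y]_q) = [D(x), y]_q + [x, D(y)]_q for all x, y ∈ W_q, then there exist a linear map D₀: W_q → W_q with D₀(W_qⁿ) ⊆ W_qⁿ for all n ∈ ℤ satisfying D₀([x,y]_q) = [D₀(x), y]_q + [x, D₀(y)]_q, and an element v ∈ W_q, such that D(x) = D₀(x) + [x, v]_q for all x ∈ W_q. -/

import Mathlib

noncomputable section

/-- The underlying space of the q-deformed W(2,2) algebra: formal ℂ-linear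
combinations of the basis `{L_n, M_n : n ∈ ℤ}`. -/
abbrev Wq : Type := (ℤ →₀ ℂ) × (ℤ →₀ ℂ)

/-- The basis vector `L_n`. -/
def Lb (n : ℤ) : Wq := (Finsupp.single n 1, 0)

/-- The basis vector `M_n`. -/
def Mb (n : ℤ) : Wq := (0, Finsupp.single n 1)

/-- The q-number `[n]_q = (q^n - q^(-n))/(q - q⁻¹)`. -/
def qnum (q : ℂ) (n : ℤ) : ℂ := (q ^ n - q ^ (-n)) / (q - q⁻¹)

/-- `⟨n⟩_q = q^n + q^(-n)`. -/
def qang (q : ℂ) (n : ℤ) : ℂ := q ^ n + q ^ (-n)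

/-- The graded subspace `W_qⁿ = span_ℂ{L_n, M_n}`. -/
def Wgr (n : ℤ) : Submodule ℂ Wq := Submodule.span ℂ {Lb n, Mb n}

theorem Wq_ext {f g : Wq →ₗ[ℂ] ℂ} (hL : ∀ n, f (Lb n) = g (Lb n))
    (hM : ∀ n, f (Mb n) = g (Mb n)) (x : Wq) : f x = g x := by
  have : f = g := by
    apply LinearMap.prod_ext
    · apply Finsupp.lhom_ext'
      intro n
      apply LinearMap.ext_ring
      simpa [Lb] using hL n
    · apply Finsupp.lhom_ext'
      intro n
      apply LinearMap.ext_ring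
      simpa [Mb] using hM n
  rw [this]

/-- The `L_m` coordinate. -/
def cL (m : ℤ) : Wq →ₗ[ℂ] ℂ := (Finsupp.lapply m).comp (LinearMap.fst ℂ _ _)

/-- The `M_m` coordinate. -/
def cM (m : ℤ) : Wq →ₗ[ℂ] ℂ := (Finsupp.lapply m).comp (LinearMap.snd ℂ _ _)

theorem cL_Lb (m n : ℤ) : cL m (Lb n) = if n = m then 1 else 0 := by
  simp [cL, Lb, Finsupp.single_apply]

theorem cM_Mb (m n : ℤ) : cM m (Mb n) = if n = m then 1 else 0 := by
  simp [cM, Mb, Finsupp.single_apply]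

theorem cL_Mb (m n : ℤ) : cL m (Mb n) = 0 := by simp [cL, Mb]

theorem cM_Lb (m n : ℤ) : cM m (Lb n) = 0 := by simp [cM, Lb]

theorem mem_Wgr {n : ℤ} {x : Wq} (h : ∀ m, m ≠ n → cL m x = 0 ∧ cM m x = 0) :
    x ∈ Wgr n := by
  rw [Wgr, Submodule.mem_span_pair]
  refine ⟨cL n x, cM n x, ?_⟩
  ext m
  · by_cases hm : m = n
    · subst hm; simp [Lb, Mb, cL, cM]
    · have := (h m hm).1
      simp only [cL, LinearMap.comp_apply, Finsupp.lapply_apply, LinearMap.fst_apply] at this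
      simp [Lb, Mb, cL, cM, Finsupp.single_apply, Ne.symm hm, this]
  · by_cases hm : m = n
    · subst hm; simp [Lb, Mb, cL, cM]
    · have := (h m hm).2
      simp only [cM, LinearMap.comp_apply, Finsupp.lapply_apply, LinearMap.snd_apply] at this
      simp [Lb, Mb, cL, cM, Finsupp.single_apply, Ne.symm hm, this]

theorem zpow_ne_of_ne {q : ℂ} (hq0 : q ≠ 0) (hq1 : ∀ k : ℤ, 1 ≤ k → q ^ k ≠ 1)
    {k : ℤ} (hk : k ≠ 0) : q ^ k ≠ 1 := by
  rcases lt_or_gt_of_ne hk with h | h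
  · intro h1
    apply hq1 (-k) (by omega)
    rw [zpow_neg, h1, inv_one]
  · exact hq1 k (by omega)

theorem qnum_ne {q : ℂ} (hq0 : q ≠ 0) (hq1 : ∀ k : ℤ, 1 ≤ k → q ^ k ≠ 1)
    {k : ℤ} (hk : k ≠ 0) : qnum q k ≠ 0 := by
  have key : ∀ j : ℤ, j ≠ 0 → q ^ j - q ^ (-j) ≠ 0 := by
    intro j hj h
    apply zpow_ne_of_ne hq0 hq1 (k := j + j) (by omega)
    rw [zpow_add₀ hq0]
    rw [sub_eq_zero] at h
    nth_rewrite 2 [h]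
    rw [← zpow_add₀ hq0]; simp
  have h1 := key 1 one_ne_zero
  simp only [zpow_one, zpow_neg] at h1
  exact div_ne_zero (key k hk) h1

theorem qang_ne {q : ℂ} (hq0 : q ≠ 0) (hq1 : ∀ k : ℤ, 1 ≤ k → q ^ k ≠ 1)
    {m n : ℤ} (h1 : m ≠ n) (h2 : m ≠ -n) : qang q n ≠ qang q m := by
  intro h
  have e : (q ^ (m - n) - 1) * (q ^ (m + n) - 1) = 0 := by
    have hm := zpow_ne_zero m hq0
    have hn := zpow_ne_zero n hq0
    simp only [qang, zpow_neg] at h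
    rw [zpow_add₀ hq0, zpow_sub₀ hq0]
    field_simp at h ⊢
    linear_combination -h
  rcases mul_eq_zero.1 e with e | e
  · exact zpow_ne_of_ne hq0 hq1 (k := m - n) (by omega) (sub_eq_zero.1 e)
  · exact zpow_ne_of_ne hq0 hq1 (k := m + n) (by omega) (sub_eq_zero.1 e)

/-- Every derivation of the q-deformed W(2,2) algebra is the sum of a
derivation of degree zero and an inner derivation. -/
theorem derivation_eq_degree_zero_add_inner (q : ℂ) (hq0 : q ≠ 0)
    (hq1 : ∀ k : ℤ, 1 ≤ k → q ^ k ≠ 1)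
    (br : Wq →ₗ[ℂ] Wq →ₗ[ℂ] Wq) (α : Wq →ₗ[ℂ] Wq)
    (hLL : ∀ n m : ℤ, br (Lb n) (Lb m) = qnum q (m - n) • Lb (m + n))
    (hLM : ∀ n m : ℤ, br (Lb n) (Mb m) = qnum q (m - n) • Mb (m + n))
    (hML : ∀ m n : ℤ, br (Mb m) (Lb n) = qnum q (n - m) • Mb (m + n))
    (hMM : ∀ n m : ℤ, br (Mb n) (Mb m) = 0)
    (hαL : ∀ n : ℤ, α (Lb n) = qang q n • Lb n)
    (hαM : ∀ n : ℤ, α (Mb n) = qang q n • Mb n)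
    (D : Wq →ₗ[ℂ] Wq)
    (hDα : ∀ x : Wq, D (α x) = α (D x))
    (hDder : ∀ x y : Wq, D (br x y) = br (D x) y + br x (D y)) :
    ∃ (D₀ : Wq →ₗ[ℂ] Wq) (v : Wq),
      (∀ (n : ℤ), ∀ x ∈ Wgr n, D₀ x ∈ Wgr n) ∧
      (∀ x y : Wq, D₀ (br x y) = br (D₀ x) y + br x (D₀ y)) ∧
      (∀ x : Wq, D x = D₀ x + br x v) := by
  have aL : ∀ m x, cL m (α x) = qang q m * cL m x := by
    intro m x
    refine Wq_ext (f := (cL m).comp α) (g := qang q m • cL m) ?_ ?_ x <;> intro n <;>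
      by_cases h : n = m <;> simp [hαL, hαM, cL_Lb, cL_Mb, h]
  have aM : ∀ m x, cM m (α x) = qang q m * cM m x := by
    intro m x
    refine Wq_ext (f := (cM m).comp α) (g := qang q m • cM m) ?_ ?_ x <;> intro n <;>
      by_cases h : n = m <;> simp [hαL, hαM, cM_Lb, cM_Mb, h]
  have B : ∀ n m x, α x = qang q n • x → m ≠ n → m ≠ -n →
      cL m (D x) = 0 ∧ cM m (D x) = 0 := by
    intro n m x hx h1 h2
    have hne := sub_ne_zero.2 (qang_ne hq0 hq1 h1 h2)
    have e := hDα x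
    rw [hx, map_smul] at e
    have e1 := congrArg (cL m) e
    have e2 := congrArg (cM m) e
    rw [aL, map_smul, smul_eq_mul] at e1
    rw [aM, map_smul, smul_eq_mul] at e2
    constructor
    · exact (mul_eq_zero.1 (by linear_combination e1 :
        (qang q n - qang q m) * cL m (D x) = 0)).resolve_left hne
    · exact (mul_eq_zero.1 (by linear_combination e2 :
        (qang q n - qang q m) * cM m (D x) = 0)).resolve_left hne
  -- right multiplication by `L_b`
  have rLL : ∀ b m x, cL m (br x (Lb b)) = qnum q (b + b - m) * cL (m - b) x := by
    intro b m x
    refine Wq_ext (f := (cL m).comp (br.flip (Lb b))) (g := qnum q (b + b - m) • cL (m - b))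
      ?_ ?_ x <;> intro n
    · by_cases h : n = m - b
      · subst h
        simp [hLL, cL_Lb]; congr 1; omega
      · have : ¬ (b + n = m) := by omega
        simp [hLL, cL_Lb, h, this]
    · simp [hML, cL_Mb]
  have rLM : ∀ b m x, cM m (br x (Lb b)) = qnum q (b + b - m) * cM (m - b) x := by
    intro b m x
    refine Wq_ext (f := (cM m).comp (br.flip (Lb b))) (g := qnum q (b + b - m) • cM (m - b))
      ?_ ?_ x <;> intro n
    · simp [hLL, cM_Lb]
    · by_cases h : n = m - b
      · subst h
        simp [hML, cM_Mb]; congr 1; omega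
      · have : ¬ (n + b = m) := by omega
        simp [hML, cM_Mb, h, this]
  have rML : ∀ b m x, cL m (br x (Mb b)) = 0 := by
    intro b m x
    refine Wq_ext (f := (cL m).comp (br.flip (Mb b))) (g := 0) ?_ ?_ x <;> intro n
    · simp [hLM, cL_Mb]
    · simp [hMM]
  have rMM : ∀ b m x, cM m (br x (Mb b)) = qnum q (b + b - m) * cL (m - b) x := by
    intro b m x
    refine Wq_ext (f := (cM m).comp (br.flip (Mb b))) (g := qnum q (b + b - m) • cL (m - b))
      ?_ ?_ x <;> intro n
    · by_cases h : n = m - b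
      · subst h
        simp [hLM, cM_Mb, cL_Lb]; congr 1; omega
      · have : ¬ (b + n = m) := by omega
        simp [hLM, cM_Mb, cL_Lb, h, this]
    · simp [hMM, cL_Mb]
  -- left multiplication by `L_a`
  have lL : ∀ a m x, cL m (br (Lb a) x) = qnum q (m - a - a) * cL (m - a) x := by
    intro a m x
    refine Wq_ext (f := (cL m).comp (br (Lb a))) (g := qnum q (m - a - a) • cL (m - a))
      ?_ ?_ x <;> intro n
    · by_cases h : n = m - a
      · subst h
        simp [hLL, cL_Lb]
      · have : ¬ (n + a = m) := by omega
        simp [hLL, cL_Lb, h, this]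
    · simp [hLM, cL_Mb]
  have lM : ∀ a m x, cM m (br (Lb a) x) = qnum q (m - a - a) * cM (m - a) x := by
    intro a m x
    refine Wq_ext (f := (cM m).comp (br (Lb a))) (g := qnum q (m - a - a) • cM (m - a))
      ?_ ?_ x <;> intro n
    · simp [hLL, cM_Lb]
    · by_cases h : n = m - a
      · subst h
        simp [hLM, cM_Mb]
      · have : ¬ (n + a = m) := by omega
        simp [hLM, cM_Mb, h, this]
  have C : ∀ k m, m ≠ k → (cL m (D (Lb k)) = 0 ∧ cM m (D (Lb k)) = 0) ∧
      (cL m (D (Mb k)) = 0 ∧ cM m (D (Mb k)) = 0) := by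
    intro k m hmk
    by_cases hm : m = -k
    · have hk : k ≠ 0 := by omega
      have hne := qnum_ne hq0 hq1 (k := 2 * k - -k) (by omega)
      have hs : 2 * k + -k = k := by ring
      have b1 := B (-k) (m - 2 * k) _ (hαL (-k)) (by omega) (by omega)
      have b2 := B (2 * k) (m - -k) _ (hαL (2 * k)) (by omega) (by omega)
      have b3 := B (2 * k) (m - -k) _ (hαM (2 * k)) (by omega) (by omega)
      have e := hDder (Lb (-k)) (Lb (2 * k))
      have e' := hDder (Lb (-k)) (Mb (2 * k))
      rw [hLL, hs, map_smul] at e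
      rw [hLM, hs, map_smul] at e'
      have e1 := congrArg (cL m) e
      have e2 := congrArg (cM m) e
      have e3 := congrArg (cL m) e'
      have e4 := congrArg (cM m) e'
      rw [map_smul, map_add, rLL, lL, b1.1, b2.1, smul_eq_mul, mul_zero, mul_zero,
        add_zero] at e1
      rw [map_smul, map_add, rLM, lM, b1.2, b2.2, smul_eq_mul, mul_zero, mul_zero,
        add_zero] at e2
      rw [map_smul, map_add, rML, lL, b3.1, smul_eq_mul, mul_zero, add_zero] at e3
      rw [map_smul, map_add, rMM, lM, b1.1, b3.2, smul_eq_mul, mul_zero, mul_zero,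
        add_zero] at e4
      exact ⟨⟨(mul_eq_zero.1 e1).resolve_left hne, (mul_eq_zero.1 e2).resolve_left hne⟩,
        ⟨(mul_eq_zero.1 e3).resolve_left hne, (mul_eq_zero.1 e4).resolve_left hne⟩⟩
    · exact ⟨B k m _ (hαL k) hmk hm, B k m _ (hαM k) hmk hm⟩
  refine ⟨D, 0, ?_, hDder, fun x => by simp⟩
  intro n x hx
  have hle : Wgr n ≤ (Wgr n).comap D := by
    conv_lhs => rw [Wgr]
    rw [Submodule.span_le]
    rintro y (rfl | rfl)
    · exact mem_Wgr fun m hm => (C n m hm).1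
    · exact mem_Wgr fun m hm => (C n m hm).2
  exact hle hx
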